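/- arXiv:2509.14359 — 2 statements merged into one kernel-verified Lean document; each statement's English description precedes it below -/
import Mathlib

section
/- Let N = {n_1,…,n_s; n} be a scheme for distinct nodes X = {A_1,…,A_s} ⊂ ℝ². If the Hermite interpolation problem (N,X) is n-solvable, then for every nonzero bivariate real polynomial f of degree k with 1 ≤ k ≤ n, the sum of the multiplicities n_i over the nodes A_i with f(A_i) = 0 is at most d(n,k) := k(2n+3−k)/2. -/
open MvPolynomial

/-- `Dij i j p` is the partial derivative `D^{ij} p = ∂^{i+j} p / ∂x^i ∂y^j`. -/
noncomputable def Dij (i j : ℕ) (p : MvPolynomial (Fin 2) ℝ) : MvPolynomial (Fin 2) ℝ :=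
  (fun q => pderiv (0 : Fin 2) q)^[i] ((fun q => pderiv (1 : Fin 2) q)^[j] p)

/-- The Hermite interpolation problem with multiplicities `nk` on the nodes `A` is
`n`-solvable: every data admits an interpolant in `Π_n`. -/
def HermiteSolvable (n s : ℕ) (nk : Fin s → ℕ) (A : Fin s → Fin 2 → ℝ) : Prop :=
  ∀ c : Fin s → ℕ → ℕ → ℝ,
    ∃ p : MvPolynomial (Fin 2) ℝ, p.totalDegree ≤ n ∧
      ∀ (k : Fin s) (i j : ℕ), i + j + 1 ≤ nk k → eval (A k) (Dij i j p) = c k i j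

def TriT (m : ℕ) : Finset (Σ _ : ℕ, ℕ) := (Finset.range m).sigma (fun d => Finset.range (d + 1))

lemma mem_TriT (m : ℕ) (x : Σ _ : ℕ, ℕ) : x ∈ TriT m ↔ x.1 < m ∧ x.2 < x.1 + 1 := by
  simp [TriT, Finset.mem_sigma]

lemma card_TriT_succ (m : ℕ) : (TriT (m + 1)).card = (TriT m).card + (m + 1) := by
  simp [TriT, Finset.card_sigma, Finset.sum_range_succ]

lemma two_card_TriT (m : ℕ) : 2 * (TriT m).card = m * (m + 1) := by
  induction m with
  | zero => simp [TriT]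
  | succ m ih => rw [card_TriT_succ, mul_add, ih]; ring

noncomputable def DijL (i j : ℕ) : MvPolynomial (Fin 2) ℝ →ₗ[ℝ] MvPolynomial (Fin 2) ℝ :=
  ((pderiv (0 : Fin 2)).toLinearMap ^ i) ∘ₗ ((pderiv (1 : Fin 2)).toLinearMap ^ j)

lemma DijL_apply (i j : ℕ) (p : MvPolynomial (Fin 2) ℝ) : DijL i j p = Dij i j p := by
  simp only [DijL, Dij, LinearMap.comp_apply, Module.End.pow_apply]
  rfl

lemma pderiv_comm' (p : MvPolynomial (Fin 2) ℝ) :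
    pderiv 1 (pderiv 0 p) = pderiv 0 (pderiv 1 p) := by
  have h : ⁅pderiv (R := ℝ) (1 : Fin 2), pderiv (R := ℝ) (0 : Fin 2)⁆ = 0 := by
    apply MvPolynomial.derivation_ext
    intro i
    fin_cases i <;> simp [Derivation.commutator_apply, pderiv_X]
  have := congrArg (fun D => D p) h
  simpa [Derivation.commutator_apply, sub_eq_zero] using this

lemma Dij_zero (p : MvPolynomial (Fin 2) ℝ) : Dij 0 0 p = p := rfl

lemma Dij_succ_right (i j : ℕ) (p : MvPolynomial (Fin 2) ℝ) :
    Dij i (j + 1) p = Dij i j (pderiv 1 p) := by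
  simp only [Dij, Function.iterate_succ_apply]

lemma iter_comm (j : ℕ) (p : MvPolynomial (Fin 2) ℝ) :
    pderiv 0 ((fun q => pderiv (1 : Fin 2) q)^[j] p)
      = (fun q => pderiv (1 : Fin 2) q)^[j] (pderiv 0 p) := by
  have h : Function.Commute (fun q : MvPolynomial (Fin 2) ℝ => pderiv (0 : Fin 2) q)
      (fun q => pderiv (1 : Fin 2) q) := fun q => (pderiv_comm' q).symm
  exact h.iterate_right j p

lemma Dij_succ_left (i j : ℕ) (p : MvPolynomial (Fin 2) ℝ) :
    Dij (i + 1) j p = Dij i j (pderiv 0 p) := by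
  simp only [Dij, Function.iterate_succ_apply, iter_comm]

def Van (a : Fin 2 → ℝ) (m : ℕ) (p : MvPolynomial (Fin 2) ℝ) : Prop :=
  ∀ i j, i + j + 1 ≤ m → eval a (Dij i j p) = 0

lemma van_succ (a : Fin 2 → ℝ) (m : ℕ) (p : MvPolynomial (Fin 2) ℝ) :
    Van a (m + 1) p ↔ eval a p = 0 ∧ ∀ t, Van a m (pderiv t p) := by
  constructor
  · intro h
    refine ⟨by simpa [Dij_zero] using h 0 0 (by omega), fun t i j hij => ?_⟩
    fin_cases t
    · simpa [Dij_succ_left] using h (i + 1) j (by omega)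
    · simpa [Dij_succ_right] using h i (j + 1) (by omega)
  · rintro ⟨h0, h1⟩ i j hij
    rcases i with _ | i
    · rcases j with _ | j
      · simpa [Dij_zero] using h0
      · rw [Dij_succ_right]; exact h1 1 _ _ (by omega)
    · rw [Dij_succ_left]; exact h1 0 _ _ (by omega)

lemma van_mono {a : Fin 2 → ℝ} {m m' : ℕ} {p : MvPolynomial (Fin 2) ℝ} (h : m ≤ m')
    (hp : Van a m' p) : Van a m p := fun i j hij => hp i j (by omega)

lemma van_add {a : Fin 2 → ℝ} {m : ℕ} {p q : MvPolynomial (Fin 2) ℝ}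
    (hp : Van a m p) (hq : Van a m q) : Van a m (p + q) := by
  intro i j hij
  rw [← DijL_apply, map_add, map_add, DijL_apply, DijL_apply, hp i j hij, hq i j hij, add_zero]

lemma van_mul {a : Fin 2 → ℝ} {m : ℕ} {q : MvPolynomial (Fin 2) ℝ}
    (hq : Van a m q) (g : MvPolynomial (Fin 2) ℝ) : Van a m (g * q) := by
  induction m generalizing g q with
  | zero => intro i j h; omega
  | succ m ih =>
    have h := (van_succ _ _ _).1 hq
    refine (van_succ _ _ _).2 ⟨by simp [h.1], fun t => ?_⟩
    rw [Derivation.leibniz, smul_eq_mul, smul_eq_mul, mul_comm q]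
    exact van_add (ih (h.2 t) g) (ih (van_mono (Nat.le_succ m) hq) _)

lemma van_mul_succ {a : Fin 2 → ℝ} {m : ℕ} {q f : MvPolynomial (Fin 2) ℝ}
    (hf : eval a f = 0) (hq : Van a m q) : Van a (m + 1) (f * q) := by
  induction m generalizing q with
  | zero => exact (van_succ _ _ _).2 ⟨by simp [hf], fun t i j h => by omega⟩
  | succ m ih =>
    have h := (van_succ _ _ _).1 hq
    refine (van_succ _ _ _).2 ⟨by simp [hf], fun t => ?_⟩
    rw [Derivation.leibniz, smul_eq_mul, smul_eq_mul, mul_comm q]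
    exact van_add (ih (h.2 t)) (van_mul hq _)

noncomputable def triEquiv (n : ℕ) : ({a : Fin 2 →₀ ℕ | a.degree ≤ n} : Set _) ≃ TriT (n + 1) where
  toFun a := ⟨⟨a.1 0 + a.1 1, a.1 0⟩, by
    have : a.1.degree ≤ n := a.2
    rw [Finsupp.degree_eq_sum, Fin.sum_univ_two] at this
    rw [mem_TriT]; dsimp only; omega⟩
  invFun x := ⟨Finsupp.equivFunOnFinite.symm ![x.1.2, x.1.1 - x.1.2], by
    have := (mem_TriT _ _).1 x.2
    rw [Set.mem_setOf_eq, Finsupp.degree_eq_sum, Fin.sum_univ_two]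
    simp; omega⟩
  left_inv a := by
    ext t
    fin_cases t <;> simp
  right_inv x := by
    have := (mem_TriT _ _).1 x.2
    obtain ⟨⟨d, e⟩, hx⟩ := x
    simp at this ⊢
    omega

lemma finrank_Pi (n : ℕ) : Module.finrank ℝ (restrictTotalDegree (Fin 2) ℝ n) = (TriT (n + 1)).card := by
  rw [restrictTotalDegree, Module.finrank_eq_nat_card_basis (basisRestrictSupport ℝ _)]
  rw [Nat.card_congr ((Equiv.setCongr (by
    ext a; simp [Finsupp.degree_apply, Finsupp.sum])).trans (triEquiv n)), Nat.card_eq_fintype_card, Fintype.card_coe]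

instance finite_Pi (n : ℕ) : Module.Finite ℝ (restrictTotalDegree (Fin 2) ℝ n) := by
  apply Module.finite_of_finrank_pos
  rw [finrank_Pi, card_TriT_succ]; omega

abbrev JetIx (s : ℕ) (P : Fin s → Prop) (nk : Fin s → ℕ) := Σ k : {k : Fin s // P k}, TriT (nk k)

noncomputable def jet (n s : ℕ) (P : Fin s → Prop) (nk : Fin s → ℕ) (A : Fin s → Fin 2 → ℝ) :
    restrictTotalDegree (Fin 2) ℝ n →ₗ[ℝ] (JetIx s P nk → ℝ) :=
  LinearMap.pi fun x => (aeval (R := ℝ) (A x.1)).toLinearMap ∘ₗ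
    DijL x.2.1.2 (x.2.1.1 - x.2.1.2) ∘ₗ (restrictTotalDegree (Fin 2) ℝ n).subtype

lemma jet_apply (n s : ℕ) (P : Fin s → Prop) (nk : Fin s → ℕ) (A : Fin s → Fin 2 → ℝ) (p x) :
    jet n s P nk A p x = eval (A x.1) (Dij x.2.1.2 (x.2.1.1 - x.2.1.2) p) := by
  simp [jet, DijL_apply, aeval_eq_eval]

lemma mem_ker_jet (n s : ℕ) (P : Fin s → Prop) (nk : Fin s → ℕ) (A : Fin s → Fin 2 → ℝ) (p) :
    p ∈ LinearMap.ker (jet n s P nk A) ↔ ∀ k, P k → Van (A k) (nk k) p := by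
  rw [LinearMap.mem_ker]
  constructor
  · intro h k hk i j hij
    have := congrFun h ⟨⟨k, hk⟩, ⟨⟨i + j, i⟩, by rw [mem_TriT]; dsimp only; omega⟩⟩
    rw [jet_apply] at this
    simpa using this
  · intro h
    ext x
    rw [jet_apply]
    have := (mem_TriT _ _).1 x.2.2
    exact h _ x.1.2 _ _ (by omega)

lemma jet_surj (n s : ℕ) (P : Fin s → Prop) (nk : Fin s → ℕ) (A : Fin s → Fin 2 → ℝ)
    (hs : HermiteSolvable n s nk A) : Function.Surjective (jet n s P nk A) := by
  classical
  intro g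
  obtain ⟨p, hp, h⟩ := hs fun k i j => if h : P k ∧ (⟨i + j, i⟩ : Σ _ : ℕ, ℕ) ∈ TriT (nk k) then
    g ⟨⟨k, h.1⟩, ⟨_, h.2⟩⟩ else 0
  refine ⟨⟨p, (mem_restrictTotalDegree _ _ _).2 hp⟩, ?_⟩
  ext ⟨⟨k, hk⟩, ⟨⟨d, e⟩, hx⟩⟩
  have hx' := (mem_TriT _ _).1 hx
  dsimp only at hx'
  obtain ⟨j, rfl⟩ : ∃ j, d = e + j := ⟨d - e, by omega⟩
  rw [jet_apply]
  have := h k e j (by omega)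
  rw [dif_pos ⟨hk, hx⟩] at this
  simpa using this

lemma finrank_jets (s : ℕ) (P : Fin s → Prop) [DecidablePred P] (nk : Fin s → ℕ) :
    Module.finrank ℝ (JetIx s P nk → ℝ) = ∑ k ∈ Finset.univ.filter P, (TriT (nk k)).card := by
  rw [Module.finrank_fintype_fun_eq_card, Fintype.card_sigma]
  simp only [Fintype.card_coe]
  exact (Finset.sum_subtype _ (by simp) (fun k => (TriT (nk k)).card)).symm


open scoped Classical in
theorem stmt_3 (n s : ℕ) (nk : Fin s → ℕ) (hnk : ∀ k, 1 ≤ nk k)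
    (A : Fin s → Fin 2 → ℝ) (hA : Function.Injective A)
    (hsolv : HermiteSolvable n s nk A) :
    ∀ (f : MvPolynomial (Fin 2) ℝ) (k : ℕ), f ≠ 0 → 1 ≤ k → k ≤ n →
      f.totalDegree = k →
      ∑ i ∈ Finset.univ.filter fun i => eval (A i) f = 0, nk i ≤
        k * (2 * n + 3 - k) / 2 := by
  intro f k hf hk1 hkn hdeg
  set P : Fin s → Prop := fun i => eval (A i) f = 0 with hP
  have h1 := LinearMap.finrank_range_add_finrank_ker (jet n s P nk A)
  rw [LinearMap.range_eq_top.2 (jet_surj n s P nk A hsolv), finrank_top, finrank_jets, finrank_Pi] at h1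
  have h2 := LinearMap.finrank_range_add_finrank_ker (jet (n - k) s P (fun i => nk i - 1) A)
  have h3 := Submodule.finrank_le (LinearMap.range (jet (n - k) s P (fun i => nk i - 1) A))
  rw [finrank_jets] at h3
  rw [finrank_Pi] at h2
  have hmem : ∀ q : LinearMap.ker (jet (n - k) s P (fun i => nk i - 1) A),
      f * (q : restrictTotalDegree (Fin 2) ℝ (n - k)).1 ∈ restrictTotalDegree (Fin 2) ℝ n := by
    intro q
    rw [mem_restrictTotalDegree]
    have := (mem_restrictTotalDegree _ _ _).1 q.1.2
    have := totalDegree_mul f q.1.1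
    omega
  let M : LinearMap.ker (jet (n - k) s P (fun i => nk i - 1) A) →ₗ[ℝ]
      LinearMap.ker (jet n s P nk A) :=
    { toFun := fun q => ⟨⟨f * q.1.1, hmem q⟩, by
        rw [mem_ker_jet]
        intro i hi
        have := van_mul_succ hi ((mem_ker_jet _ _ _ _ _ _).1 q.2 i hi)
        rwa [Nat.sub_add_cancel (hnk i)] at this⟩
      map_add' := fun p q => by ext1; ext1; simp [mul_add]
      map_smul' := fun c q => by ext1; ext1; simp }
  have hM : Function.Injective M := by
    intro p q h
    have h' : f * p.1.1 = f * q.1.1 := congrArg (fun z => z.1.1) h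
    exact Subtype.ext (Subtype.ext (mul_left_cancel₀ hf h'))
  have h4 := LinearMap.finrank_le_finrank_of_injective hM
  have h5 : ∑ i ∈ Finset.univ.filter P, (TriT (nk i)).card
      = ∑ i ∈ Finset.univ.filter P, (TriT (nk i - 1)).card + ∑ i ∈ Finset.univ.filter P, nk i := by
    rw [← Finset.sum_add_distrib]
    refine Finset.sum_congr rfl fun i _ => ?_
    have := card_TriT_succ (nk i - 1)
    rwa [Nat.sub_add_cancel (hnk i)] at this
  have h6 := two_card_TriT (n + 1)
  have h7 := two_card_TriT (n - k + 1)
  rw [Nat.le_div_iff_mul_le two_pos]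
  have h8 : ∑ i ∈ Finset.univ.filter P, nk i + (TriT (n - k + 1)).card ≤ (TriT (n + 1)).card := by
    omega
  obtain ⟨m, rfl⟩ : ∃ m, n = k + m := ⟨n - k, by omega⟩
  have e1 : k + m - k = m := by omega
  have e2 : 2 * (k + m) + 3 - k = k + 2 * m + 3 := by omega
  rw [e1] at h7 h8
  rw [e2]
  nlinarith
end

section
/- Let N = {n_1,…,n_s; n} be a scheme for distinct nodes X = {A_1,…,A_s} ⊂ ℝ² with n ≥ 2. If the Hermite interpolation problem (N,X) is n-solvable, then for every conic β the sum of the multiplicities n_i over the nodes A_i lying on β is at most 2n+1. -/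
open MvPolynomial

/-- Index set of the derivatives of order `< m`. -/
def TT (m : ℕ) : Finset (ℕ × ℕ) :=
  (Finset.range m ×ˢ Finset.range m).filter fun x => x.1 + x.2 < m

lemma mem_TT {m : ℕ} {x : ℕ × ℕ} : x ∈ TT m ↔ x.1 + x.2 < m := by
  simp only [TT, Finset.mem_filter, Finset.mem_product, Finset.mem_range]
  omega

lemma card_TT_succ (m : ℕ) : (TT (m + 1)).card = (TT m).card + (m + 1) := by
  have h : TT (m + 1) = TT m ∪ Finset.HasAntidiagonal.antidiagonal m := by
    ext x
    simp only [Finset.mem_union, mem_TT, Finset.HasAntidiagonal.mem_antidiagonal]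
    omega
  rw [h, Finset.card_union_of_disjoint, Finset.Nat.card_antidiagonal]
  rw [Finset.disjoint_left]
  intro x
  simp only [mem_TT, Finset.HasAntidiagonal.mem_antidiagonal]
  omega

noncomputable def DL (i j : ℕ) : MvPolynomial (Fin 2) ℝ →ₗ[ℝ] MvPolynomial (Fin 2) ℝ :=
  ((pderiv (R := ℝ) (0 : Fin 2)).toLinearMap ^ i) * ((pderiv (R := ℝ) (1 : Fin 2)).toLinearMap ^ j)

lemma DL_apply (i j : ℕ) (p : MvPolynomial (Fin 2) ℝ) : DL i j p = Dij i j p := by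
  simp only [DL, Dij, Module.End.mul_apply, Module.End.pow_apply]
  rfl

lemma pderiv_comm01 (p : MvPolynomial (Fin 2) ℝ) :
    pderiv (0 : Fin 2) (pderiv (1 : Fin 2) p) = pderiv (1 : Fin 2) (pderiv (0 : Fin 2) p) := by
  have h : ⁅pderiv (R := ℝ) (0 : Fin 2), pderiv (R := ℝ) (1 : Fin 2)⁆ = 0 := by
    apply MvPolynomial.derivation_ext
    intro i
    rw [Derivation.commutator_apply]
    fin_cases i <;> simp
  have h2 := congrArg (fun d => d p) h
  simp only [Derivation.commutator_apply, Derivation.zero_apply] at h2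
  exact sub_eq_zero.1 h2

/-- All derivatives of order `< m` vanish at `a`. -/
def VV (a : Fin 2 → ℝ) : ℕ → MvPolynomial (Fin 2) ℝ → Prop
  | 0, _ => True
  | m + 1, p => eval a p = 0 ∧ VV a m (pderiv 0 p) ∧ VV a m (pderiv 1 p)

lemma VV_iff (a : Fin 2 → ℝ) (m : ℕ) (p : MvPolynomial (Fin 2) ℝ) :
    VV a m p ↔ ∀ i j, i + j < m → eval a (Dij i j p) = 0 := by
  induction m generalizing p with
  | zero => simp [VV]
  | succ m ih =>
    simp only [VV, ih]
    constructor
    · rintro ⟨h0, h1, h2⟩ i j hij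
      rcases i with _ | i
      · rcases j with _ | j
        · simpa [Dij] using h0
        · rw [Dij_succ_right]; exact h2 _ _ (by omega)
      · rw [Dij_succ_left]; exact h1 _ _ (by omega)
    · intro h
      refine ⟨by simpa [Dij] using h 0 0 (by omega), fun i j hij => ?_, fun i j hij => ?_⟩
      · rw [← Dij_succ_left]; exact h _ _ (by omega)
      · rw [← Dij_succ_right]; exact h _ _ (by omega)

lemma VV_add {a : Fin 2 → ℝ} {m : ℕ} {p q : MvPolynomial (Fin 2) ℝ}
    (hp : VV a m p) (hq : VV a m q) : VV a m (p + q) := by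
  induction m generalizing p q with
  | zero => trivial
  | succ m ih =>
    refine ⟨by simp [hp.1, hq.1], ?_, ?_⟩
    · rw [map_add]; exact ih hp.2.1 hq.2.1
    · rw [map_add]; exact ih hp.2.2 hq.2.2

lemma VV_mono {a : Fin 2 → ℝ} {m : ℕ} {p : MvPolynomial (Fin 2) ℝ}
    (hp : VV a (m + 1) p) : VV a m p := by
  rw [VV_iff] at *
  intro i j hij
  exact hp i j (by omega)

lemma VV_mul {a : Fin 2 → ℝ} {m : ℕ} (b : MvPolynomial (Fin 2) ℝ) {q : MvPolynomial (Fin 2) ℝ}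
    (hq : VV a m q) : VV a m (b * q) := by
  induction m generalizing b q with
  | zero => trivial
  | succ m ih =>
    refine ⟨by simp [hq.1], ?_, ?_⟩
    · rw [pderiv_mul]; exact VV_add (ih _ (VV_mono hq)) (ih _ hq.2.1)
    · rw [pderiv_mul]; exact VV_add (ih _ (VV_mono hq)) (ih _ hq.2.2)

lemma VV_mul_succ {a : Fin 2 → ℝ} {m : ℕ} {b : MvPolynomial (Fin 2) ℝ} (hb : eval a b = 0)
    {q : MvPolynomial (Fin 2) ℝ} (hq : VV a m q) : VV a (m + 1) (b * q) := by
  induction m generalizing q with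
  | zero => exact ⟨by simp [hb], trivial, trivial⟩
  | succ m ih =>
    refine ⟨by simp [hb], ?_, ?_⟩
    · rw [pderiv_mul]; exact VV_add (VV_mul _ hq) (ih hq.2.1)
    · rw [pderiv_mul]; exact VV_add (VV_mul _ hq) (ih hq.2.2)

/-- Exponents of total degree `≤ n` correspond to `TT (n+1)`. -/
noncomputable def expEquiv (n : ℕ) :
    {s : Fin 2 →₀ ℕ | (s.sum fun _ e => e) ≤ n} ≃ {x // x ∈ TT (n + 1)} :=
  Equiv.subtypeEquiv (Finsupp.equivFunOnFinite.trans (finTwoArrowEquiv ℕ)) (by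
    intro s
    rw [mem_TT]
    simp only [Set.mem_ofPred_eq]
    rw [Finsupp.sum_fintype _ _ (by simp)]
    simp)

noncomputable def polyEquiv (n : ℕ) :
    restrictTotalDegree (Fin 2) ℝ n ≃ₗ[ℝ] ({x // x ∈ TT (n + 1)} →₀ ℝ) :=
  (basisRestrictSupport ℝ {s : Fin 2 →₀ ℕ | (s.sum fun _ e => e) ≤ n}).repr.trans
    (Finsupp.domLCongr (expEquiv n))

lemma P_finite (n : ℕ) : Module.Finite ℝ (restrictTotalDegree (Fin 2) ℝ n) :=
  Module.Finite.equiv (polyEquiv n).symm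

lemma P_finrank (n : ℕ) : Module.finrank ℝ (restrictTotalDegree (Fin 2) ℝ n)
    = (TT (n + 1)).card := by
  rw [(polyEquiv n).finrank_eq]
  simp

noncomputable def JJ {ι : Type} (A : ι → Fin 2 → ℝ) (m : ι → ℕ) :
    MvPolynomial (Fin 2) ℝ →ₗ[ℝ] ((Σ k : ι, {x // x ∈ TT (m k)}) → ℝ) :=
  LinearMap.pi fun x => (aeval (R := ℝ) (A x.1)).toLinearMap ∘ₗ DL x.2.1.1 x.2.1.2

lemma JJ_apply {ι : Type} (A : ι → Fin 2 → ℝ) (m : ι → ℕ) (p : MvPolynomial (Fin 2) ℝ) (x) :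
    JJ A m p x = eval (A x.1) (Dij x.2.1.1 x.2.1.2 p) := by
  simp [JJ, DL_apply, aeval_eq_eval]

lemma JJ_ker {ι : Type} (A : ι → Fin 2 → ℝ) (m : ι → ℕ) (p : MvPolynomial (Fin 2) ℝ) :
    JJ A m p = 0 ↔ ∀ k, VV (A k) (m k) p := by
  simp only [VV_iff]
  constructor
  · intro h k i j hij
    have := congrFun h ⟨k, ⟨(i, j), mem_TT.2 hij⟩⟩
    rwa [JJ_apply] at this
  · intro h
    funext x
    rw [JJ_apply]
    exact h _ _ _ (mem_TT.1 x.2.2)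

lemma main_ineq {ι : Type} [Fintype ι] (A : ι → Fin 2 → ℝ) (m : ι → ℕ) (hm : ∀ k, 1 ≤ m k)
    (n : ℕ) (b : MvPolynomial (Fin 2) ℝ) (hb0 : b ≠ 0) (hb : b.totalDegree = 2)
    (hbA : ∀ k, eval (A k) b = 0)
    (hs : ∀ c, ∃ p ∈ restrictTotalDegree (Fin 2) ℝ (n + 2), JJ A m p = c) :
    ∑ k, m k ≤ 2 * (n + 2) + 1 := by
  have := P_finite n
  have := P_finite (n + 2)
  let L := (JJ A m).domRestrict (restrictTotalDegree (Fin 2) ℝ (n + 2))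
  let J := (JJ A (fun k => m k - 1)).domRestrict (restrictTotalDegree (Fin 2) ℝ n)
  let M : restrictTotalDegree (Fin 2) ℝ n →ₗ[ℝ] restrictTotalDegree (Fin 2) ℝ (n + 2) :=
    (LinearMap.mulLeft ℝ b).restrict (by
      intro p hp
      rw [mem_restrictTotalDegree] at *
      rw [LinearMap.mulLeft_apply]
      have := totalDegree_mul b p
      omega)
  have hM : Function.Injective M := by
    intro p q h
    have h2 : b * p.1 = b * q.1 := congrArg Subtype.val h
    exact Subtype.ext (mul_left_cancel₀ hb0 h2)
  have hL : LinearMap.range L = ⊤ := by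
    rw [LinearMap.range_eq_top]
    intro c
    obtain ⟨p, hp, h⟩ := hs c
    exact ⟨⟨p, hp⟩, h⟩
  have hker : (LinearMap.ker J).map M ≤ LinearMap.ker L := by
    rintro _ ⟨q, hq, rfl⟩
    have h1 : JJ A (fun k => m k - 1) q.1 = 0 := hq
    rw [JJ_ker] at h1
    change JJ A m (b * q.1) = 0
    rw [JJ_ker]
    intro k
    have := VV_mul_succ (hbA k) (h1 k)
    rwa [Nat.sub_add_cancel (hm k)] at this
  have e1 := LinearMap.finrank_range_add_finrank_ker L
  have e2 := LinearMap.finrank_range_add_finrank_ker J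
  have e3 := Submodule.finrank_mono hker
  rw [← (Submodule.equivMapOfInjective M hM _).finrank_eq] at e3
  have e4 := Submodule.finrank_le (LinearMap.range J)
  rw [hL, finrank_top] at e1
  rw [P_finrank] at e1 e2
  simp only [Module.finrank_fintype_fun_eq_card, Fintype.card_sigma, Fintype.card_coe] at e1 e4
  have e5 : ∑ k, (TT (m k)).card = ∑ k, (TT (m k - 1)).card + ∑ k, m k := by
    rw [← Finset.sum_add_distrib]
    refine Finset.sum_congr rfl fun k _ => ?_
    have := card_TT_succ (m k - 1)
    rwa [Nat.sub_add_cancel (hm k)] at this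
  have e6 := card_TT_succ (n + 2)
  have e7 : (TT (n + 2)).card = (TT (n + 1)).card + (n + 1 + 1) := card_TT_succ (n + 1)
  omega

open scoped Classical in
theorem stmt_5 (n s : ℕ) (hn : 2 ≤ n) (nk : Fin s → ℕ) (hnk : ∀ k, 1 ≤ nk k)
    (A : Fin s → Fin 2 → ℝ) (hA : Function.Injective A)
    (hsolv : HermiteSolvable n s nk A) :
    ∀ β : MvPolynomial (Fin 2) ℝ, β ≠ 0 → β.totalDegree = 2 →
      ∑ i ∈ Finset.univ.filter fun i => eval (A i) β = 0, nk i ≤ 2 * n + 1 := by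
  intro β hβ0 hβ
  obtain ⟨n, rfl⟩ := Nat.exists_eq_add_of_le' hn
  have key := main_ineq (ι := {i : Fin s // eval (A i) β = 0}) (fun k => A k.1) (fun k => nk k.1)
    (fun k => hnk _) n β hβ0 hβ (fun k => k.2) (by
      intro c
      obtain ⟨p, hp, h⟩ := hsolv (fun k i j =>
        if hk : eval (A k) β = 0 ∧ (i, j) ∈ TT (nk k) then c ⟨⟨k, hk.1⟩, ⟨(i, j), hk.2⟩⟩ else 0)
      refine ⟨p, (mem_restrictTotalDegree _ _ _).2 hp, ?_⟩
      funext x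
      obtain ⟨⟨k, hk⟩, ⟨⟨i, j⟩, hx⟩⟩ := x
      rw [JJ_apply]
      have hx' : i + j < nk k := mem_TT.1 hx
      have := h k i j (by omega)
      rw [dif_pos ⟨hk, hx⟩] at this
      exact this)
  refine le_trans (le_of_eq ?_) key
  exact (Finset.sum_subtype _ (by simp) _)
end
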